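/- Let C be a copula and let r = ρ(C) be its Spearman's rho. Then for all (u,v) ∈ [0,1]²: if −1 ≤ r ≤ −5/9 then |C(u,v) − C(v,u)| ≤ ((1+r)/12)^{1/3}; if −5/9 ≤ r ≤ −1/3 then |C(u,v) − C(v,u)| ≤ 1/3; and if −1/3 ≤ r ≤ 1 then |C(u,v) − C(v,u)| ≤ ((1−r)/36)^{1/3}. -/

import Mathlib

open Set MeasureTheory intervalIntegral

/-- A bivariate copula: boundary conditions plus the 2-increasing property. -/
def IsCopula (C : ℝ → ℝ → ℝ) : Prop :=
  (∀ u ∈ Set.Icc (0:ℝ) 1, C u 0 = 0 ∧ C 0 u = 0 ∧ C u 1 = u ∧ C 1 u = u) ∧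
  ∀ u₁ u₂ v₁ v₂ : ℝ, 0 ≤ u₁ → u₁ ≤ u₂ → u₂ ≤ 1 → 0 ≤ v₁ → v₁ ≤ v₂ → v₂ ≤ 1 →
    0 ≤ C u₂ v₂ - C u₂ v₁ - C u₁ v₂ + C u₁ v₁

/-- The lower bound function C̲^{(a,b)}_c. -/
noncomputable def lowerC (a b c : ℝ) : ℝ → ℝ → ℝ := fun u v =>
  max (max (u + v - 1) 0)
    (min (min (max (a + b - 1) 0 + c) (u - a + (max (a + b - 1) 0 + c)))
      (min (v - b + (max (a + b - 1) 0 + c)) (u + v - a - b + (max (a + b - 1) 0 + c))))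

/-- The upper bound function C̄^{(a,b)}_c. -/
noncomputable def upperC (a b c : ℝ) : ℝ → ℝ → ℝ := fun u v =>
  min (min u v)
    (max (max (min a b - c) (u - b + (min a b - c)))
      (max (v - a + (min a b - c)) (u + v - a - b + (min a b - c))))

/-- Spearman's rho of a copula. -/
noncomputable def spearmanRho (C : ℝ → ℝ → ℝ) : ℝ :=
  12 * (∫ u in (0:ℝ)..1, ∫ v in (0:ℝ)..1, C u v) - 3

/-- Spearman's footrule of a copula. -/
noncomputable def spearmanFootrule (C : ℝ → ℝ → ℝ) : ℝ :=
  6 * (∫ u in (0:ℝ)..1, C u u) - 2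

/-- Gini's gamma of a copula. -/
noncomputable def giniGamma (C : ℝ → ℝ → ℝ) : ℝ :=
  4 * (∫ u in (0:ℝ)..1, (C u u + C u (1 - u))) - 2

/-- Blomqvist's beta of a copula. -/
noncomputable def blomqvistBeta (C : ℝ → ℝ → ℝ) : ℝ :=
  4 * C (1/2) (1/2) - 1

namespace IsCopula

variable {C : ℝ → ℝ → ℝ}

theorem mono_left (hC : IsCopula C) {u u' v : ℝ} (hu : 0 ≤ u) (huu' : u ≤ u') (hu' : u' ≤ 1)
    (hv : 0 ≤ v) (hv1 : v ≤ 1) : C u v ≤ C u' v := by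
  have h := hC.2 u u' 0 v hu huu' hu' le_rfl hv hv1
  have h₁ := (hC.1 u ⟨hu, by linarith⟩).1
  have h₂ := (hC.1 u' ⟨by linarith, hu'⟩).1
  linarith

theorem mono_right (hC : IsCopula C) {u v v' : ℝ} (hv : 0 ≤ v) (hvv' : v ≤ v') (hv' : v' ≤ 1)
    (hu : 0 ≤ u) (hu1 : u ≤ 1) : C u v ≤ C u v' := by
  have h := hC.2 0 u v v' le_rfl hu hu1 hv hvv' hv'
  have h₁ := (hC.1 v ⟨hv, by linarith⟩).2.1
  have h₂ := (hC.1 v' ⟨by linarith, hv'⟩).2.1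
  linarith

theorem sub_left_le (hC : IsCopula C) {u u' v : ℝ} (hu : 0 ≤ u) (huu' : u ≤ u') (hu' : u' ≤ 1)
    (hv : 0 ≤ v) (hv1 : v ≤ 1) : C u' v - C u v ≤ u' - u := by
  have h := hC.2 u u' v 1 hu huu' hu' hv hv1 le_rfl
  have h₁ := (hC.1 u ⟨hu, by linarith⟩).2.2.1
  have h₂ := (hC.1 u' ⟨by linarith, hu'⟩).2.2.1
  linarith

theorem sub_right_le (hC : IsCopula C) {u v v' : ℝ} (hv : 0 ≤ v) (hvv' : v ≤ v') (hv' : v' ≤ 1)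
    (hu : 0 ≤ u) (hu1 : u ≤ 1) : C u v' - C u v ≤ v' - v := by
  have h := hC.2 u 1 v v' hu hu1 le_rfl hv hvv' hv'
  have h₁ := (hC.1 v ⟨hv, by linarith⟩).2.2.2
  have h₂ := (hC.1 v' ⟨by linarith, hv'⟩).2.2.2
  linarith

theorem nonneg (hC : IsCopula C) {u v : ℝ} (hu : u ∈ Icc (0 : ℝ) 1) (hv : v ∈ Icc (0 : ℝ) 1) :
    0 ≤ C u v :=
  (hC.1 v hv).2.1 ▸ hC.mono_left le_rfl hu.1 hu.2 hv.1 hv.2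

theorem le_left (hC : IsCopula C) {u v : ℝ} (hu : u ∈ Icc (0 : ℝ) 1) (hv : v ∈ Icc (0 : ℝ) 1) :
    C u v ≤ u := by
  have h := hC.mono_right hv.1 hv.2 le_rfl hu.1 hu.2
  rwa [(hC.1 u hu).2.2.1] at h

theorem le_right (hC : IsCopula C) {u v : ℝ} (hu : u ∈ Icc (0 : ℝ) 1) (hv : v ∈ Icc (0 : ℝ) 1) :
    C u v ≤ v := by
  have h := hC.mono_left hu.1 hu.2 le_rfl hv.1 hv.2
  rwa [(hC.1 v hv).2.2.2] at h

theorem add_sub_one_le (hC : IsCopula C) {u v : ℝ} (hu : u ∈ Icc (0 : ℝ) 1)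
    (hv : v ∈ Icc (0 : ℝ) 1) : u + v - 1 ≤ C u v := by
  have h := hC.sub_right_le hv.1 hv.2 le_rfl hu.1 hu.2
  rw [(hC.1 u hu).2.2.1] at h
  linarith

theorem le_add_max (hC : IsCopula C) {a b u v : ℝ} (ha : a ∈ Icc (0 : ℝ) 1)
    (hb : b ∈ Icc (0 : ℝ) 1) (hu : u ∈ Icc (0 : ℝ) 1) (hv : v ∈ Icc (0 : ℝ) 1) :
    C u v ≤ C a b + max (u - a) 0 + max (v - b) 0 := by
  have h₁ : C u v ≤ C a v + max (u - a) 0 := by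
    rcases le_total u a with h | h
    · linarith [hC.mono_left hu.1 h ha.2 hv.1 hv.2, le_max_right (u - a) 0]
    · linarith [hC.sub_left_le ha.1 h hu.2 hv.1 hv.2, le_max_left (u - a) 0]
  have h₂ : C a v ≤ C a b + max (v - b) 0 := by
    rcases le_total v b with h | h
    · linarith [hC.mono_right hv.1 h hb.2 ha.1 ha.2, le_max_right (v - b) 0]
    · linarith [hC.sub_right_le hb.1 h hv.2 ha.1 ha.2, le_max_left (v - b) 0]
  linarith

theorem intervalIntegrable_right (hC : IsCopula C) {u : ℝ} (hu : u ∈ Icc (0 : ℝ) 1) :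
    IntervalIntegrable (C u) volume 0 1 := by
  refine MonotoneOn.intervalIntegrable fun v hv w hw hvw => ?_
  rw [uIcc_of_le zero_le_one] at hv hw
  exact hC.mono_right hv.1 hvw hw.2 hu.1 hu.2

theorem intervalIntegrable_integral (hC : IsCopula C) :
    IntervalIntegrable (fun u => ∫ v in (0 : ℝ)..1, C u v) volume 0 1 := by
  refine MonotoneOn.intervalIntegrable fun u hu w hw huw => ?_
  rw [uIcc_of_le zero_le_one] at hu hw
  exact integral_mono_on zero_le_one (hC.intervalIntegrable_right hu)
    (hC.intervalIntegrable_right hw) fun v hv => hC.mono_left hu.1 huw hw.2 hv.1 hv.2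

end IsCopula

/-- The trapezoidal bump of height `h` supported on `[α, β]` with sides of slope `±1`. -/
noncomputable def trapezoid (α β h x : ℝ) : ℝ := max 0 (min h (min (x - α) (β - x)))

theorem continuous_trapezoid (α β h : ℝ) : Continuous (trapezoid α β h) := by
  unfold trapezoid
  fun_prop

theorem integral_trapezoid {α β h : ℝ} (hα : 0 ≤ α) (hβ : β ≤ 1) (hh : 0 ≤ h)
    (hαβ : 2 * h ≤ β - α) : ∫ x in (0 : ℝ)..1, trapezoid α β h x = h * (β - α - h) := by
  have hi : ∀ a b, IntervalIntegrable (trapezoid α β h) volume a b :=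
    fun a b => (continuous_trapezoid α β h).intervalIntegrable a b
  have e₁ : ∫ x in (0 : ℝ)..α, trapezoid α β h x = ∫ x in (0 : ℝ)..α, (0 : ℝ) := by
    refine integral_congr fun x hx => ?_
    rw [uIcc_of_le hα] at hx
    exact max_eq_left (by simp [hx.2])
  have e₂ : ∫ x in α..(α + h), trapezoid α β h x = ∫ x in α..(α + h), (x - α) := by
    refine integral_congr fun x hx => ?_
    rw [uIcc_of_le (by linarith)] at hx
    obtain ⟨h₁, h₂⟩ := hx
    simp only [trapezoid]
    rw [min_eq_left (by linarith : x - α ≤ β - x), min_eq_right (by linarith),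
      max_eq_right (by linarith)]
  have e₃ : ∫ x in (α + h)..(β - h), trapezoid α β h x = ∫ x in (α + h)..(β - h), h := by
    refine integral_congr fun x hx => ?_
    rw [uIcc_of_le (by linarith)] at hx
    obtain ⟨h₁, h₂⟩ := hx
    simp only [trapezoid]
    rw [min_eq_left (le_min (by linarith) (by linarith)), max_eq_right hh]
  have e₄ : ∫ x in (β - h)..β, trapezoid α β h x = ∫ x in (β - h)..β, (β - x) := by
    refine integral_congr fun x hx => ?_
    rw [uIcc_of_le (by linarith)] at hx
    obtain ⟨h₁, h₂⟩ := hx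
    simp only [trapezoid]
    rw [min_eq_right (by linarith : β - x ≤ x - α), min_eq_right (by linarith),
      max_eq_right (by linarith)]
  have e₅ : ∫ x in β..(1 : ℝ), trapezoid α β h x = ∫ x in β..(1 : ℝ), (0 : ℝ) := by
    refine integral_congr fun x hx => ?_
    rw [uIcc_of_le hβ] at hx
    exact max_eq_left (by simp [hx.1])
  rw [← integral_add_adjacent_intervals (hi 0 α) (hi α 1),
    ← integral_add_adjacent_intervals (hi α (α + h)) (hi (α + h) 1),
    ← integral_add_adjacent_intervals (hi (α + h) (β - h)) (hi (β - h) 1),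
    ← integral_add_adjacent_intervals (hi (β - h) β) (hi β 1), e₁, e₂, e₃, e₄, e₅]
  simp only [intervalIntegral.integral_const, smul_eq_mul,
    intervalIntegral.integral_sub intervalIntegrable_id intervalIntegrable_const,
    intervalIntegral.integral_sub intervalIntegrable_const intervalIntegrable_id, integral_id]
  ring

theorem integral_min_right {u : ℝ} (hu : u ∈ Icc (0 : ℝ) 1) :
    ∫ v in (0 : ℝ)..1, min u v = u - u ^ 2 / 2 := by
  have hi : ∀ a b, IntervalIntegrable (fun v => min u v) volume a b :=
    fun a b => (by fun_prop : Continuous fun v => min u v).intervalIntegrable a b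
  have e₁ : ∫ v in (0 : ℝ)..u, min u v = ∫ v in (0 : ℝ)..u, v := by
    refine integral_congr fun v hv => ?_
    rw [uIcc_of_le hu.1] at hv
    exact min_eq_right hv.2
  have e₂ : ∫ v in u..1, min u v = ∫ v in u..1, u := by
    refine integral_congr fun v hv => ?_
    rw [uIcc_of_le hu.2] at hv
    exact min_eq_left hv.1
  rw [← integral_add_adjacent_intervals (hi 0 u) (hi u 1), e₁, e₂, integral_id,
    intervalIntegral.integral_const, smul_eq_mul]
  ring

theorem integral_max_add_sub_one {u : ℝ} (hu : u ∈ Icc (0 : ℝ) 1) :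
    ∫ v in (0 : ℝ)..1, max (u + v - 1) 0 = u ^ 2 / 2 := by
  have h : ∀ v, max (u + v - 1) 0 = u - min u (1 - v) := fun v => by
    rw [sub_eq_add_neg u, ← max_neg_neg, ← max_add_add_left, max_comm]
    congr 1 <;> ring
  simp only [h]
  rw [intervalIntegral.integral_sub intervalIntegrable_const
      ((by fun_prop : Continuous fun v => min u (1 - v)).intervalIntegrable _ _),
    intervalIntegral.integral_comp_sub_left (fun v => min u v) 1]
  simp only [sub_self, sub_zero, integral_min_right hu, intervalIntegral.integral_const,
    smul_eq_mul]
  ring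

namespace IsCopula

variable {C : ℝ → ℝ → ℝ}

theorem integral_right_le (hC : IsCopula C) {u α β h : ℝ} (hu : u ∈ Icc (0 : ℝ) 1) (hα : 0 ≤ α)
    (hβ : β ≤ 1) (hh : 0 ≤ h) (hαβ : 2 * h ≤ β - α)
    (H : ∀ v ∈ Icc (0 : ℝ) 1, min h (min (v - α) (β - v)) ≤ min u v - C u v) :
    ∫ v in (0 : ℝ)..1, C u v ≤ u - u ^ 2 / 2 - h * (β - α - h) := by
  have hm := (by fun_prop : Continuous fun v => min u v).intervalIntegrable (μ := volume) 0 1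
  have ht := (continuous_trapezoid α β h).intervalIntegrable (μ := volume) 0 1
  rw [← integral_min_right hu, ← integral_trapezoid hα hβ hh hαβ,
    ← intervalIntegral.integral_sub hm ht]
  refine integral_mono_on zero_le_one (hC.intervalIntegrable_right hu) (hm.sub ht) fun v hv => ?_
  have : trapezoid α β h v ≤ min u v - C u v :=
    max_le (sub_nonneg.2 (le_min (hC.le_left hu hv) (hC.le_right hu hv))) (H v hv)
  linarith

theorem le_integral_right (hC : IsCopula C) {u α β h : ℝ} (hu : u ∈ Icc (0 : ℝ) 1) (hα : 0 ≤ α)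
    (hβ : β ≤ 1) (hh : 0 ≤ h) (hαβ : 2 * h ≤ β - α)
    (H : ∀ v ∈ Icc (0 : ℝ) 1, min h (min (v - α) (β - v)) ≤ C u v - max (u + v - 1) 0) :
    u ^ 2 / 2 + h * (β - α - h) ≤ ∫ v in (0 : ℝ)..1, C u v := by
  have hm := (by fun_prop : Continuous fun v => max (u + v - 1) 0).intervalIntegrable
    (μ := volume) 0 1
  have ht := (continuous_trapezoid α β h).intervalIntegrable (μ := volume) 0 1
  rw [← integral_max_add_sub_one hu, ← integral_trapezoid hα hβ hh hαβ,
    ← intervalIntegral.integral_add hm ht]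
  refine integral_mono_on zero_le_one (hm.add ht) (hC.intervalIntegrable_right hu) fun v hv => ?_
  have : trapezoid α β h v ≤ C u v - max (u + v - 1) 0 :=
    max_le (sub_nonneg.2 (max_le (hC.add_sub_one_le hu hv) (hC.nonneg hu hv))) (H v hv)
  linarith

theorem integral_right_le_sub_sq (hC : IsCopula C) {u : ℝ} (hu : u ∈ Icc (0 : ℝ) 1) :
    ∫ v in (0 : ℝ)..1, C u v ≤ u - u ^ 2 / 2 := by
  have := hC.integral_right_le hu le_rfl zero_le_one le_rfl (by norm_num) fun v hv =>
    (min_le_left 0 _).trans (sub_nonneg.2 (le_min (hC.le_left hu hv) (hC.le_right hu hv)))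
  simpa using this

theorem sq_div_two_le_integral_right (hC : IsCopula C) {u : ℝ} (hu : u ∈ Icc (0 : ℝ) 1) :
    u ^ 2 / 2 ≤ ∫ v in (0 : ℝ)..1, C u v := by
  have := hC.le_integral_right hu le_rfl zero_le_one le_rfl (by norm_num) fun v hv =>
    (min_le_left 0 _).trans
      (sub_nonneg.2 (max_le (hC.add_sub_one_le hu hv) (hC.nonneg hu hv)))
  simpa using this

/-- A copula exceeding the lower Fréchet–Hoeffding bound by `c` at a point has integral at least
`1 / 6 + c ^ 3`. -/
theorem le_integral (hC : IsCopula C) {a b c : ℝ} (ha : a ∈ Icc (0 : ℝ) 1)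
    (hb : b ∈ Icc (0 : ℝ) 1) (hc : 0 ≤ c) (h : max (a + b - 1) 0 + c ≤ C a b) :
    1 / 6 + c ^ 3 ≤ ∫ u in (0 : ℝ)..1, ∫ v in (0 : ℝ)..1, C u v := by
  have hW := le_max_left (a + b - 1) 0
  have hW0 := le_max_right (a + b - 1) 0
  have hCa := hC.le_left ha hb
  have hCb := hC.le_right ha hb
  have key : ∀ u ∈ Icc (0 : ℝ) 1,
      u ^ 2 / 2 + c * trapezoid (a - c) (a + c) c u ≤ ∫ v in (0 : ℝ)..1, C u v := by
    intro u hu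
    have hpt : ∀ v ∈ Icc (0 : ℝ) 1,
        c - max (a - u) 0 - max (b - v) 0 - max (u + v - a - b) 0
          ≤ C u v - max (u + v - 1) 0 := by
      intro v hv
      have h₁ := hC.le_add_max hu hv ha hb
      have h₂ : max (u + v - 1) 0 ≤ max (a + b - 1) 0 + max (u + v - a - b) 0 :=
        max_le (by linarith [le_max_left (u + v - a - b) 0])
          (by linarith [le_max_right (u + v - a - b) 0])
      linarith
    rcases le_total u (a - c) with h₁ | h₁
    · rw [trapezoid, max_eq_left (by simp [h₁]), mul_zero, add_zero]
      exact hC.sq_div_two_le_integral_right hu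
    rcases le_total (a + c) u with h₂ | h₂
    · rw [trapezoid, max_eq_left (by simp [h₂]), mul_zero, add_zero]
      exact hC.sq_div_two_le_integral_right hu
    rcases le_total u a with h₃ | h₃
    · have := hC.le_integral_right (α := b - (c + (u - a))) (β := b + c) (h := c + (u - a)) hu
        (by linarith) (by linarith) (by linarith) (by linarith)
        fun v hv => le_trans (by grind) (hpt v hv)
      have ht : trapezoid (a - c) (a + c) c u = c + (u - a) := by grind [trapezoid]
      rw [ht]
      linarith
    · have := hC.le_integral_right (α := b - c) (β := b + (c - (u - a))) (h := c - (u - a)) hu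
        (by linarith) (by linarith) (by linarith) (by linarith)
        fun v hv => le_trans (by grind) (hpt v hv)
      have ht : trapezoid (a - c) (a + c) c u = c - (u - a) := by grind [trapezoid]
      rw [ht]
      linarith
  have hsq : IntervalIntegrable (fun u : ℝ => u ^ 2 / 2) volume 0 1 :=
    (by fun_prop : Continuous fun u : ℝ => u ^ 2 / 2).intervalIntegrable _ _
  have ht := ((continuous_trapezoid (a - c) (a + c) c).intervalIntegrable
    (μ := volume) 0 1).const_mul c
  have hmono := integral_mono_on zero_le_one (hsq.add ht) hC.intervalIntegrable_integral key
  rw [intervalIntegral.integral_add hsq ht, intervalIntegral.integral_const_mul,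
    integral_trapezoid (by linarith) (by linarith) hc (by linarith),
    intervalIntegral.integral_div, integral_pow] at hmono
  norm_num at hmono
  linarith

theorem integral_le_of_trapezoids (hC : IsCopula C) {c α β α' β' : ℝ} (hc : 0 ≤ c)
    (hα : 0 ≤ α) (hβ : β ≤ 1) (hαβ : β - α = 3 * c)
    (hα' : 0 ≤ α') (hβ' : β' ≤ 1) (hαβ' : β' - α' = 2 * c)
    (key : ∀ u ∈ Icc (0 : ℝ) 1, ∫ v in (0 : ℝ)..1, C u v ≤
      u - u ^ 2 / 2 - c * (trapezoid α β c u + trapezoid α' β' c u)) :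
    ∫ u in (0 : ℝ)..1, ∫ v in (0 : ℝ)..1, C u v ≤ 1 / 3 - 3 * c ^ 3 := by
  have hid : IntervalIntegrable (fun u : ℝ => u) volume 0 1 := intervalIntegrable_id
  have hsq : IntervalIntegrable (fun u : ℝ => u ^ 2 / 2) volume 0 1 :=
    (by fun_prop : Continuous fun u : ℝ => u ^ 2 / 2).intervalIntegrable _ _
  have ht := (continuous_trapezoid α β c).intervalIntegrable (μ := volume) 0 1
  have ht' := (continuous_trapezoid α' β' c).intervalIntegrable (μ := volume) 0 1
  have hmono := integral_mono_on zero_le_one hC.intervalIntegrable_integral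
    ((hid.sub hsq).sub ((ht.add ht').const_mul c)) key
  rw [intervalIntegral.integral_sub (hid.sub hsq) ((ht.add ht').const_mul c),
    intervalIntegral.integral_sub hid hsq, intervalIntegral.integral_const_mul,
    intervalIntegral.integral_add ht ht',
    integral_trapezoid hα hβ hc (by linarith), integral_trapezoid hα' hβ' hc (by linarith),
    intervalIntegral.integral_div, integral_pow, integral_id, hαβ, hαβ'] at hmono
  norm_num at hmono
  linarith

/-- Upper bound on the integral of a copula lying `c` below the upper Fréchet–Hoeffding bound
at the point `(p, p + c)`. -/
theorem integral_le_of_le_above (hC : IsCopula C) {p c : ℝ} (hc : 0 ≤ c) (hcp : c ≤ p)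
    (hp : p + 2 * c ≤ 1) (h : C p (p + c) ≤ p - c) :
    ∫ u in (0 : ℝ)..1, ∫ v in (0 : ℝ)..1, C u v ≤ 1 / 3 - 3 * c ^ 3 := by
  refine hC.integral_le_of_trapezoids (α := p - c) (β := p + 2 * c) (α' := p - c) (β' := p + c)
    hc (by linarith) hp (by ring) (by linarith) (by linarith) (by ring) fun u hu => ?_
  have hpt : ∀ v ∈ Icc (0 : ℝ) 1,
      min u v - (p - c) - max (u - p) 0 - max (v - (p + c)) 0 ≤ min u v - C u v := by
    intro v hv
    have := hC.le_add_max (a := p) (b := p + c) ⟨by linarith, by linarith⟩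
      ⟨by linarith, by linarith⟩ hu hv
    linarith
  rcases le_total u (p - c) with h₁ | h₁
  · have ht : trapezoid (p - c) (p + 2 * c) c u + trapezoid (p - c) (p + c) c u = 0 := by
      grind [trapezoid]
    rw [ht, mul_zero, sub_zero]
    exact hC.integral_right_le_sub_sq hu
  rcases le_total (p + 2 * c) u with h₂ | h₂
  · have ht : trapezoid (p - c) (p + 2 * c) c u + trapezoid (p - c) (p + c) c u = 0 := by
      grind [trapezoid]
    rw [ht, mul_zero, sub_zero]
    exact hC.integral_right_le_sub_sq hu
  rcases le_total u p with h₃ | h₃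
  · have := hC.integral_right_le (α := p - c) (β := u + 2 * c) (h := c + (u - p)) hu
      (by linarith) (by linarith) (by linarith) (by linarith)
      fun v hv => le_trans (by grind) (hpt v hv)
    have ht : trapezoid (p - c) (p + 2 * c) c u + trapezoid (p - c) (p + c) c u
        = 2 * (c + (u - p)) := by grind [trapezoid]
    rw [ht]
    linarith
  have ht : trapezoid (p - c) (p + 2 * c) c u + trapezoid (p - c) (p + c) c u
      = 2 * c - (u - p) := by grind [trapezoid]
  rw [ht]
  rcases le_total u (p + c) with h₄ | h₄
  · have := hC.integral_right_le (α := u - c) (β := p + 2 * c) (h := c) hu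
      (by linarith) (by linarith) (by linarith) (by linarith)
      fun v hv => le_trans (by grind) (hpt v hv)
    linarith
  · have := hC.integral_right_le (α := u - c) (β := p + 2 * c) (h := 2 * c - (u - p)) hu
      (by linarith) (by linarith) (by linarith) (by linarith)
      fun v hv => le_trans (by grind) (hpt v hv)
    linarith

/-- Upper bound on the integral of a copula lying `c` below the upper Fréchet–Hoeffding bound
at the point `(q + c, q)`. -/
theorem integral_le_of_le_below (hC : IsCopula C) {q c : ℝ} (hc : 0 ≤ c) (hcq : c ≤ q)
    (hq : q + 2 * c ≤ 1) (h : C (q + c) q ≤ q - c) :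
    ∫ u in (0 : ℝ)..1, ∫ v in (0 : ℝ)..1, C u v ≤ 1 / 3 - 3 * c ^ 3 := by
  refine hC.integral_le_of_trapezoids (α := q - c) (β := q + 2 * c) (α' := q) (β' := q + 2 * c)
    hc (by linarith) hq (by ring) (by linarith) hq (by ring) fun u hu => ?_
  have hpt : ∀ v ∈ Icc (0 : ℝ) 1,
      min u v - (q - c) - max (u - (q + c)) 0 - max (v - q) 0 ≤ min u v - C u v := by
    intro v hv
    have := hC.le_add_max (a := q + c) (b := q) ⟨by linarith, by linarith⟩
      ⟨by linarith, by linarith⟩ hu hv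
    linarith
  rcases le_total u (q - c) with h₁ | h₁
  · have ht : trapezoid (q - c) (q + 2 * c) c u + trapezoid q (q + 2 * c) c u = 0 := by
      grind [trapezoid]
    rw [ht, mul_zero, sub_zero]
    exact hC.integral_right_le_sub_sq hu
  rcases le_total (q + 2 * c) u with h₂ | h₂
  · have ht : trapezoid (q - c) (q + 2 * c) c u + trapezoid q (q + 2 * c) c u = 0 := by
      grind [trapezoid]
    rw [ht, mul_zero, sub_zero]
    exact hC.integral_right_le_sub_sq hu
  rcases le_total (q + c) u with h₃ | h₃
  · have := hC.integral_right_le (α := u - 2 * c) (β := q + 2 * c) (h := 2 * c - (u - q)) hu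
      (by linarith) (by linarith) (by linarith) (by linarith)
      fun v hv => le_trans (by grind) (hpt v hv)
    have ht : trapezoid (q - c) (q + 2 * c) c u + trapezoid q (q + 2 * c) c u
        = 2 * (2 * c - (u - q)) := by grind [trapezoid]
    rw [ht]
    linarith
  have ht : trapezoid (q - c) (q + 2 * c) c u + trapezoid q (q + 2 * c) c u
      = c + (u - q) := by grind [trapezoid]
  rw [ht]
  rcases le_total u q with h₄ | h₄
  · have := hC.integral_right_le (α := q - c) (β := u + c) (h := c + (u - q)) hu
      (by linarith) (by linarith) (by linarith) (by linarith)
      fun v hv => le_trans (by grind) (hpt v hv)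
    linarith
  · have := hC.integral_right_le (α := q - c) (β := u + c) (h := c) hu
      (by linarith) (by linarith) (by linarith) (by linarith)
      fun v hv => le_trans (by grind) (hpt v hv)
    linarith

theorem max_add_sub_le (hC : IsCopula C) {a b : ℝ} (ha : a ∈ Icc (0 : ℝ) 1)
    (hb : b ∈ Icc (0 : ℝ) 1) : max (a + b - 1) 0 + (C a b - C b a) ≤ C a b := by
  have : max (a + b - 1) 0 ≤ C b a :=
    max_le (by linarith [hC.add_sub_one_le hb ha]) (hC.nonneg hb ha)
  linarith

/-- Bounds on the asymmetry and, in terms of it, on the integral of a copula. -/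
theorem asymmetry_bounds (hC : IsCopula C) {p q : ℝ} (hp : p ∈ Icc (0 : ℝ) 1)
    (hq : q ∈ Icc (0 : ℝ) 1) (hpq : p ≤ q) :
    |C p q - C q p| ≤ 1 / 3 ∧
    1 / 6 + |C p q - C q p| ^ 3 ≤ ∫ u in (0 : ℝ)..1, ∫ v in (0 : ℝ)..1, C u v ∧
    ∫ u in (0 : ℝ)..1, ∫ v in (0 : ℝ)..1, C u v ≤ 1 / 3 - 3 * |C p q - C q p| ^ 3 := by
  rcases le_total (C p q) (C q p) with h | h
  · rw [abs_sub_comm, abs_of_nonneg (sub_nonneg.2 h)]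
    have h₁ := hC.le_right hq hp
    have h₂ := hC.nonneg hp hq
    have h₃ := hC.add_sub_one_le hp hq
    have h₄ := hC.sub_left_le hp.1 hpq hq.2 hp.1 hp.2
    have h₅ := hC.mono_right hp.1 hpq hq.2 hp.1 hp.2
    have h₆ := hC.mono_right (u := p) (v := p + (C q p - C p q)) (v' := q)
      (by linarith) (by linarith) hq.2 hp.1 hp.2
    exact ⟨by linarith, hC.le_integral hq hp (sub_nonneg.2 h) (hC.max_add_sub_le hq hp),
      hC.integral_le_of_le_above (p := p) (sub_nonneg.2 h) (by linarith) (by linarith)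
        (by linarith)⟩
  · rw [abs_of_nonneg (sub_nonneg.2 h)]
    have h₁ := hC.le_left hp hq
    have h₂ := hC.nonneg hq hp
    have h₃ := hC.add_sub_one_le hq hp
    have h₄ := hC.sub_right_le hp.1 hpq hq.2 hp.1 hp.2
    have h₅ := hC.mono_left hp.1 hpq hq.2 hp.1 hp.2
    have h₆ := hC.mono_left (v := p) (u := p + (C p q - C q p)) (u' := q)
      (by linarith) (by linarith) hq.2 hp.1 hp.2
    exact ⟨by linarith, hC.le_integral hp hq (sub_nonneg.2 h) (hC.max_add_sub_le hp hq),
      hC.integral_le_of_le_below (q := p) (sub_nonneg.2 h) (by linarith) (by linarith)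
        (by linarith)⟩

end IsCopula

theorem le_rpow_one_third_of_pow_three_le {x y : ℝ} (hx : 0 ≤ x) (h : x ^ 3 ≤ y) :
    x ≤ y ^ ((1 : ℝ) / 3) := by
  calc x = (x ^ 3) ^ ((1 : ℝ) / 3) := by
        rw [← Real.rpow_natCast, ← Real.rpow_mul hx]
        norm_num
    _ ≤ y ^ ((1 : ℝ) / 3) := Real.rpow_le_rpow (by positivity) h (by norm_num)

theorem asymmetry_vs_rho (C : ℝ → ℝ → ℝ) (r : ℝ) (hC : IsCopula C)
    (hr : r = spearmanRho C) :
    ∀ u ∈ Set.Icc (0:ℝ) 1, ∀ v ∈ Set.Icc (0:ℝ) 1,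
      (-1 ≤ r → r ≤ -5/9 → |C u v - C v u| ≤ ((1 + r)/12) ^ ((1:ℝ)/3)) ∧
      (-5/9 ≤ r → r ≤ -1/3 → |C u v - C v u| ≤ 1/3) ∧
      (-1/3 ≤ r → r ≤ 1 → |C u v - C v u| ≤ ((1 - r)/36) ^ ((1:ℝ)/3)) := by
  intro u hu v hv
  rw [spearmanRho] at hr
  obtain ⟨h₁, h₂, h₃⟩ : |C u v - C v u| ≤ 1 / 3 ∧
      1 / 6 + |C u v - C v u| ^ 3 ≤ ∫ u in (0 : ℝ)..1, ∫ v in (0 : ℝ)..1, C u v ∧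
      ∫ u in (0 : ℝ)..1, ∫ v in (0 : ℝ)..1, C u v ≤ 1 / 3 - 3 * |C u v - C v u| ^ 3 := by
    rcases le_total u v with huv | huv
    · exact hC.asymmetry_bounds hu hv huv
    · rw [abs_sub_comm]
      exact hC.asymmetry_bounds hv hu huv
  exact ⟨fun _ _ => le_rpow_one_third_of_pow_three_le (abs_nonneg _) (by linarith),
    fun _ _ => h₁,
    fun _ _ => le_rpow_one_third_of_pow_three_le (abs_nonneg _) (by linarith)⟩
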